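/- arXiv:1601.02566 — 2 statements merged into one kernel-verified Lean document; each statement's English description precedes it below -/
import Mathlib

section
/- Let ξ, η, σ ∈ ℂ with Im(ξ²) > 0, Im(η²) > 0, and |Re σ| < 3/4. Then ξη · H₁⁽¹⁾((ξ² + η²)/2) = −(2^{3/2}(ξ² + η²)/(π² i)) ∫_{σ−i∞}^{σ+i∞} Γ(3/4 − s) Γ(3/4 + s) D_{2s−1/2}((1−i)ξ) D_{−2s−1/2}((1−i)η) ds. (Note that ((1−i)ξ)²/2 = −iξ² has positive real part and Im((ξ²+η²)/2) > 0, so all functions appearing are in the domains of the stated representations.) -/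
/-- Confluent hypergeometric function of the second kind via its Laplace-transform
representation, valid for `Re a > 0`, `Re z > 0` (principal branch powers). -/
noncomputable def hypU (a b z : ℂ) : ℂ :=
  (Complex.Gamma a)⁻¹ *
    ∫ t in Set.Ioi (0 : ℝ), Complex.exp (-z * t) * (t : ℂ) ^ (a - 1) * ((1 : ℂ) + t) ^ (b - a - 1)

/-- Parabolic cylinder function `D_ν(z) = 2^{(ν-1)/2} e^{-z²/4} z U((1-ν)/2, 3/2, z²/2)`,
valid for `Re ν < 1`, `Re(z²) > 0` (principal branch powers). -/
noncomputable def parD (ν z : ℂ) : ℂ :=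
  (2 : ℂ) ^ ((ν - 1) / 2) * Complex.exp (-z ^ 2 / 4) * z * hypU ((1 - ν) / 2) (3 / 2) (z ^ 2 / 2)

/-- Order-one Hankel function of the first kind,
`H₁⁽¹⁾(ζ) = (-2i/√π) e^{i(ζ-π)} (2ζ) U(3/2, 3, -2iζ)`, valid for `Im ζ > 0`. -/
noncomputable def hankelH11 (ζ : ℂ) : ℂ :=
  -2 * Complex.I / (Real.sqrt Real.pi : ℂ) * Complex.exp (Complex.I * (ζ - Real.pi)) *
    (2 * ζ) * hypU (3 / 2) 3 (-2 * Complex.I * ζ)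

/-!
In the variable `t = 1 / (e ^ x - 1)`, for which `(1 + t) / t = e ^ x`, the Laplace integral of
`Γ(a + iτ) U(a + iτ, b, z)` is the Fourier integral, with frequency `τ`, of the function
`x ↦ e ^ (-z t) t ^ a (1 + t) ^ (b - a)`. These functions multiply by adding the parameters
`(a, b, z)`, so Parseval's identity evaluates the integral over `τ` of a product
`Γ(a - iτ) U(a - iτ, b, z) Γ(a' + iτ) U(a' + iτ, b', z')` as
`2π Γ(a + a') U(a + a', b + b', z + z')`. Two factors `U(·, 3/2, ·)`, i.e. two parabolic cylinder
functions, give `U(·, 3, ·)`, which is a Hankel function of order one when `a + a' = 3/2`.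
-/

open MeasureTheory Set
open scoped FourierTransform SchwartzMap ContDiff ComplexConjugate ComplexInnerProductSpace

section Parseval

variable {V F : Type*} [NormedAddCommGroup V] [InnerProductSpace ℝ V] [FiniteDimensional ℝ V]
  [MeasurableSpace V] [BorelSpace V]
  [NormedAddCommGroup F] [InnerProductSpace ℂ F] [CompleteSpace F]

-- Both sides define the same tempered distribution.
theorem fourier_toLp_two_ae_eq {f : V → F} (hf : Integrable f) (hf₂ : MemLp f 2) :
    (𝓕 (hf₂.toLp f) : Lp (α := V) F 2) =ᵐ[volume] 𝓕 f := by
  have hcont : Continuous (𝓕 f) := VectorFourier.fourierIntegral_continuous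
    Real.continuous_fourierChar (by exact continuous_inner) hf
  refine ae_eq_of_integral_contDiff_smul_eq ((Lp.memLp _).locallyIntegrable one_le_two)
    hcont.locallyIntegrable fun g hg hg_supp ↦ ?_
  let φ : 𝓢(V, ℂ) := HasCompactSupport.toSchwartzMap (f := Complex.ofRealCLM ∘ g)
    (hg_supp.comp_left rfl) (Complex.ofRealCLM.contDiff.comp hg)
  have hφ (x : V) (y : F) : φ x • y = g x • y := Complex.coe_smul (g x) y
  have hswap : ∫ x, 𝓕 (φ : V → ℂ) x • f x = ∫ x, φ x • 𝓕 f x := by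
    simpa using! VectorFourier.integral_fourierIntegral_smul_eq_flip (L := innerₗ V)
      Real.continuous_fourierChar continuous_inner φ.integrable hf
  calc ∫ x, g x • (𝓕 (hf₂.toLp f) : Lp F 2 (volume : Measure V)) x
      = ∫ x, (𝓕 φ) x • hf₂.toLp f x := by
        simpa [hφ] using!
          (DFunLike.congr_fun (Lp.fourier_toTemperedDistribution_eq (hf₂.toLp f)) φ).symm
    _ = ∫ x, 𝓕 (φ : V → ℂ) x • f x := by
        refine integral_congr_ae ?_
        filter_upwards [hf₂.coeFn_toLp] with x hx
        rw [hx, SchwartzMap.fourier_coe]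
    _ = ∫ x, g x • 𝓕 f x := by simp only [hswap, hφ]

theorem integral_inner_fourier_eq {f g : V → F} (hf : Integrable f) (hf₂ : MemLp f 2)
    (hg : Integrable g) (hg₂ : MemLp g 2) :
    ∫ v, ⟪𝓕 f v, 𝓕 g v⟫ = ∫ x, ⟪f x, g x⟫ := by
  have h := Lp.inner_fourier_eq (hf₂.toLp f) (hg₂.toLp g)
  rw [L2.inner_def, L2.inner_def] at h
  calc ∫ v, ⟪𝓕 f v, 𝓕 g v⟫
      = ∫ v, ⟪(𝓕 (hf₂.toLp f) : Lp F 2 (volume : Measure V)) v,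
          (𝓕 (hg₂.toLp g) : Lp F 2 (volume : Measure V)) v⟫ := by
        refine integral_congr_ae ?_
        filter_upwards [fourier_toLp_two_ae_eq hf hf₂, fourier_toLp_two_ae_eq hg hg₂] with v hfv hgv
        rw [hfv, hgv]
    _ = ∫ x, ⟪hf₂.toLp f x, hg₂.toLp g x⟫ := h
    _ = ∫ x, ⟪f x, g x⟫ := by
        refine integral_congr_ae ?_
        filter_upwards [hf₂.coeFn_toLp, hg₂.coeFn_toLp] with x hfx hgx
        rw [hfx, hgx]

theorem fourier_conj (f : V → ℂ) (v : V) : 𝓕 (fun x ↦ conj (f x)) v = conj (𝓕⁻ f v) := by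
  rw [Real.fourier_eq', Real.fourierInv_eq', ← integral_conj]
  congr 1 with x
  simp [← Complex.exp_conj, Complex.conj_ofNat]

theorem integral_fourierInv_mul_fourier {f g : V → ℂ} (hf : Integrable f) (hf₂ : MemLp f 2)
    (hg : Integrable g) (hg₂ : MemLp g 2) :
    ∫ v, 𝓕⁻ f v * 𝓕 g v = ∫ x, f x * g x := by
  simpa [fourier_conj, mul_comm] using
    integral_inner_fourier_eq (f := fun x ↦ conj (f x))
      (memLp_one_iff_integrable.1 (memLp_one_iff_integrable.2 hf).star) hf₂.star hg hg₂

end Parseval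

section LaplaceIntegrand

theorem one_add_rpow_le {t β γ : ℝ} (ht : 0 ≤ t) (hβγ : β ≤ γ) (hγ : 1 ≤ γ) :
    (1 + t) ^ β ≤ 2 ^ (γ - 1) * (1 + t ^ γ) :=
  calc (1 + t) ^ β ≤ (1 + t) ^ γ := Real.rpow_le_rpow_of_exponent_le (by linarith) hβγ
    _ ≤ 2 ^ (γ - 1) * (1 + t ^ γ) := by
      lift t to NNReal using ht
      simpa using! NNReal.coe_le_coe.2 (NNReal.rpow_add_le_mul_rpow_add_rpow 1 t hγ)

theorem integrableOn_exp_mul_cpow_mul_one_add_cpow {z α : ℂ} (β : ℂ) (hz : 0 < z.re)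
    (hα : -1 < α.re) :
    IntegrableOn (fun t : ℝ ↦ Complex.exp (-z * t) * (t : ℂ) ^ α * ((1 : ℂ) + t) ^ β) (Ioi 0) := by
  set γ := max β.re 1
  have hγ : 1 ≤ γ := le_max_right _ _
  have hint {s : ℝ} (hs : -1 < s) :
      IntegrableOn (fun t : ℝ ↦ t ^ s * Real.exp (-z.re * t)) (Ioi 0) := by
    simpa using integrableOn_rpow_mul_exp_neg_mul_rpow hs one_pos hz
  refine Integrable.mono'
    (((hint hα).add (hint (s := α.re + γ) (by linarith))).const_mul (2 ^ (γ - 1))) ?_ ?_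
  · refine ContinuousOn.aestronglyMeasurable (fun t (ht : 0 < t) ↦ ?_) measurableSet_Ioi
    refine ContinuousAt.continuousWithinAt (.mul (.mul (by fun_prop) ?_) ?_)
    · exact .cpow (by fun_prop) (by fun_prop) (.inl ht)
    · exact .cpow (by fun_prop) (by fun_prop) (.inl (by simpa using add_pos one_pos ht))
  · filter_upwards [ae_restrict_mem measurableSet_Ioi] with t (ht : 0 < t)
    calc ‖Complex.exp (-z * t) * (t : ℂ) ^ α * ((1 : ℂ) + t) ^ β‖
        = Real.exp (-z.re * t) * t ^ α.re * (1 + t) ^ β.re := by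
          rw [norm_mul, norm_mul, Complex.norm_exp, Complex.norm_cpow_eq_rpow_re_of_pos ht,
            ← Complex.ofReal_one, ← Complex.ofReal_add,
            Complex.norm_cpow_eq_rpow_re_of_pos (by linarith)]
          simp
      _ ≤ Real.exp (-z.re * t) * t ^ α.re * (2 ^ (γ - 1) * (1 + t ^ γ)) := by
          gcongr
          exact one_add_rpow_le ht.le (le_max_left _ _) hγ
      _ = 2 ^ (γ - 1) * (t ^ α.re * Real.exp (-z.re * t) +
            t ^ (α.re + γ) * Real.exp (-z.re * t)) := by
          rw [Real.rpow_add ht]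
          ring

end LaplaceIntegrand

section Substitution

/-- The change of variable `t = 1 / (e ^ x - 1)`, the inverse of `x = log ((1 + t) / t)`. It maps
the half-line `x > 0` onto `t > 0`. -/
noncomputable def invExpSubOne (x : ℝ) : ℝ := (Real.exp x - 1)⁻¹

theorem invExpSubOne_pos {x : ℝ} (hx : 0 < x) : 0 < invExpSubOne x :=
  inv_pos.2 (sub_pos.2 (Real.one_lt_exp_iff.2 hx))

theorem one_add_invExpSubOne {x : ℝ} (hx : 0 < x) :
    1 + invExpSubOne x = Real.exp x * invExpSubOne x := by
  have : Real.exp x - 1 ≠ 0 := (sub_pos.2 (Real.one_lt_exp_iff.2 hx)).ne'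
  unfold invExpSubOne
  field_simp
  ring

theorem one_add_invExpSubOne_cpow {x : ℝ} (hx : 0 < x) (w : ℂ) :
    (1 + invExpSubOne x : ℂ) ^ w = Complex.exp (w * x) * (invExpSubOne x : ℂ) ^ w := by
  have h : (1 + invExpSubOne x : ℂ) = (Real.exp x : ℂ) * (invExpSubOne x : ℂ) := by
    exact_mod_cast one_add_invExpSubOne hx
  rw [h, Complex.mul_cpow_ofReal_nonneg (Real.exp_pos x).le (invExpSubOne_pos hx).le,
    Complex.cpow_def_of_ne_zero (by simp), ← Complex.ofReal_log (Real.exp_pos x).le, Real.log_exp,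
    mul_comm w]

theorem ofReal_invExpSubOne_ne_zero {x : ℝ} (hx : 0 < x) : (invExpSubOne x : ℂ) ≠ 0 :=
  Complex.ofReal_ne_zero.2 (invExpSubOne_pos hx).ne'

theorem one_add_ofReal_invExpSubOne_ne_zero {x : ℝ} (hx : 0 < x) :
    (1 + invExpSubOne x : ℂ) ≠ 0 := by
  exact_mod_cast (add_pos one_pos (invExpSubOne_pos hx)).ne'

theorem image_invExpSubOne_Ioi : invExpSubOne '' Ioi 0 = Ioi 0 := by
  refine Subset.antisymm (image_subset_iff.2 fun x ↦ invExpSubOne_pos) fun t (ht : 0 < t) ↦ ?_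
  have h : 1 < 1 + t⁻¹ := by linarith [inv_pos.2 ht]
  exact ⟨Real.log (1 + t⁻¹), Real.log_pos h, by
    simp [invExpSubOne, Real.exp_log (one_pos.trans h)]⟩

theorem invExpSubOne_injective : Function.Injective invExpSubOne := fun _ _ h ↦
  Real.exp_injective (sub_left_injective (inv_injective h))

theorem hasDerivAt_invExpSubOne {x : ℝ} (hx : 0 < x) :
    HasDerivAt invExpSubOne (-(invExpSubOne x * (1 + invExpSubOne x))) x := by
  have h : Real.exp x - 1 ≠ 0 := (sub_pos.2 (Real.one_lt_exp_iff.2 hx)).ne'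
  convert! ((Real.hasDerivAt_exp x).sub_const 1).inv h using 1
  rw [one_add_invExpSubOne hx, invExpSubOne]
  field_simp

end Substitution

section Kernel

/-- The integrand of `Γ(a) U(a, b, z)` in the variable `x = log ((1 + t) / t)`, extended by zero to
`x ≤ 0`. The Jacobian `t (1 + t)` turns the exponents `a - 1` and `b - a - 1` of the Laplace
integral into `a` and `b - a`. -/
noncomputable def hypUKernel (a b z : ℂ) : ℝ → ℂ := (Ioi 0).indicator fun x ↦
  Complex.exp (-z * invExpSubOne x) * (invExpSubOne x : ℂ) ^ a *
    (1 + invExpSubOne x : ℂ) ^ (b - a)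

theorem hypUKernel_mul_hypUKernel (a b z a' b' z' : ℂ) (x : ℝ) :
    hypUKernel a b z x * hypUKernel a' b' z' x = hypUKernel (a + a') (b + b') (z + z') x := by
  by_cases hx : x ∈ Ioi 0
  · simp only [hypUKernel, indicator_of_mem hx]
    rw [neg_add, add_mul, add_sub_add_comm, Complex.exp_add,
      Complex.cpow_add _ _ (ofReal_invExpSubOne_ne_zero hx),
      Complex.cpow_add _ _ (one_add_ofReal_invExpSubOne_ne_zero hx)]
    ring
  · simp [hypUKernel, indicator_of_notMem hx]

theorem hypUKernel_add (a w b z : ℂ) (x : ℝ) :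
    hypUKernel (a + w) b z x = Complex.exp (-w * x) * hypUKernel a b z x := by
  by_cases hx : x ∈ Ioi 0
  · simp only [hypUKernel, indicator_of_mem hx]
    rw [← sub_sub, sub_eq_add_neg (b - a), Complex.cpow_add _ _ (ofReal_invExpSubOne_ne_zero hx),
      Complex.cpow_add _ _ (one_add_ofReal_invExpSubOne_ne_zero hx),
      one_add_invExpSubOne_cpow hx (-w)]
    have hcancel : (invExpSubOne x : ℂ) ^ w * (invExpSubOne x : ℂ) ^ (-w) = 1 := by
      rw [← Complex.cpow_add _ _ (ofReal_invExpSubOne_ne_zero hx), add_neg_cancel,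
        Complex.cpow_zero]
    linear_combination (Complex.exp (-z * invExpSubOne x) * (invExpSubOne x : ℂ) ^ a *
      (1 + invExpSubOne x : ℂ) ^ (b - a) * Complex.exp (-w * x)) * hcancel
  · simp [hypUKernel, indicator_of_notMem hx]

theorem hypUKernel_eq_abs_deriv_smul (a b z : ℂ) {x : ℝ} (hx : 0 < x) :
    hypUKernel a b z x = |-(invExpSubOne x * (1 + invExpSubOne x))| •
      (Complex.exp (-z * invExpSubOne x) * (invExpSubOne x : ℂ) ^ (a - 1) *
        (1 + invExpSubOne x : ℂ) ^ (b - a - 1)) := by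
  have ht := ofReal_invExpSubOne_ne_zero hx
  have ht' := one_add_ofReal_invExpSubOne_ne_zero hx
  have hpos := invExpSubOne_pos hx
  rw [hypUKernel, indicator_of_mem (mem_Ioi.2 hx), abs_neg, abs_of_pos (by positivity),
    Complex.real_smul, Complex.cpow_sub a _ ht, Complex.cpow_sub (b - a) _ ht', Complex.cpow_one,
    Complex.cpow_one]
  push_cast
  field_simp

theorem integral_hypUKernel {a : ℂ} (b z : ℂ) (ha : 0 < a.re) :
    ∫ x, hypUKernel a b z x = Complex.Gamma a * hypU a b z := by
  rw [hypU, mul_inv_cancel_left₀ (Complex.Gamma_ne_zero_of_re_pos ha)]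
  conv_rhs => rw [← image_invExpSubOne_Ioi]
  rw [integral_image_eq_integral_abs_deriv_smul measurableSet_Ioi
      (fun x hx ↦ (hasDerivAt_invExpSubOne hx).hasDerivWithinAt) invExpSubOne_injective.injOn,
    ← setIntegral_congr_fun measurableSet_Ioi fun x hx ↦ hypUKernel_eq_abs_deriv_smul a b z hx]
  simp only [hypUKernel, setIntegral_indicator measurableSet_Ioi, inter_self,
    integral_indicator measurableSet_Ioi]

theorem integrable_hypUKernel {a z : ℂ} (b : ℂ) (ha : 0 < a.re) (hz : 0 < z.re) :
    Integrable (hypUKernel a b z) := by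
  have h := integrableOn_exp_mul_cpow_mul_one_add_cpow (α := a - 1) (b - a - 1) hz (by simpa)
  rw [← image_invExpSubOne_Ioi, integrableOn_image_iff_integrableOn_abs_deriv_smul
    measurableSet_Ioi (fun x hx ↦ (hasDerivAt_invExpSubOne hx).hasDerivWithinAt)
    invExpSubOne_injective.injOn,
    ← integrableOn_congr_fun (fun x (hx : x ∈ Ioi 0) ↦ hypUKernel_eq_abs_deriv_smul a b z hx)
      measurableSet_Ioi] at h
  simpa [hypUKernel, indicator_indicator] using (integrable_indicator_iff measurableSet_Ioi).2 h

theorem memLp_two_hypUKernel {a z : ℂ} (b : ℂ) (ha : 0 < a.re) (hz : 0 < z.re) :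
    MemLp (hypUKernel a b z) 2 := by
  rw [memLp_two_iff_integrable_sq_norm (integrable_hypUKernel b ha hz).aestronglyMeasurable]
  have hsq (x : ℝ) : ‖hypUKernel a b z x‖ ^ 2 = ‖hypUKernel (a + a) (b + b) (z + z) x‖ := by
    rw [← hypUKernel_mul_hypUKernel, norm_mul, sq]
  simpa only [hsq] using (integrable_hypUKernel (b + b) (a := a + a) (z := z + z)
    (by simpa using ha) (by simpa using hz)).norm

theorem fourier_hypUKernel {a : ℂ} (b z : ℂ) (ha : 0 < a.re) (v : ℝ) :
    𝓕 (hypUKernel a b z) v = Complex.Gamma (a + 2 * Real.pi * v * Complex.I) *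
      hypU (a + 2 * Real.pi * v * Complex.I) b z := by
  rw [← integral_hypUKernel b z (by simpa), Real.fourier_real_eq_integral_exp_smul]
  congr 1 with x
  have hexponent : ((-2 * Real.pi * x * v : ℝ) : ℂ) * Complex.I =
      -(2 * Real.pi * v * Complex.I) * x := by
    push_cast
    ring
  rw [hypUKernel_add, smul_eq_mul, hexponent]

theorem fourierInv_hypUKernel {a : ℂ} (b z : ℂ) (ha : 0 < a.re) (v : ℝ) :
    𝓕⁻ (hypUKernel a b z) v = Complex.Gamma (a - 2 * Real.pi * v * Complex.I) *
      hypU (a - 2 * Real.pi * v * Complex.I) b z := by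
  rw [Real.fourierInv_eq_fourier_neg, fourier_hypUKernel b z ha]
  simp [sub_eq_add_neg]

end Kernel

theorem integral_Gamma_mul_hypU_mul_Gamma_mul_hypU {a a' z z' : ℂ} (b b' : ℂ) (ha : 0 < a.re)
    (ha' : 0 < a'.re) (hz : 0 < z.re) (hz' : 0 < z'.re) :
    ∫ τ : ℝ, Complex.Gamma (a - Complex.I * τ) * hypU (a - Complex.I * τ) b z *
        (Complex.Gamma (a' + Complex.I * τ) * hypU (a' + Complex.I * τ) b' z') =
      2 * Real.pi * (Complex.Gamma (a + a') * hypU (a + a') (b + b') (z + z')) := by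
  have hparseval := integral_fourierInv_mul_fourier
    (integrable_hypUKernel b ha hz) (memLp_two_hypUKernel b ha hz)
    (integrable_hypUKernel b' ha' hz') (memLp_two_hypUKernel b' ha' hz')
  simp only [hypUKernel_mul_hypUKernel,
    integral_hypUKernel (b + b') (z + z') (a := a + a') (by simpa using add_pos ha ha'),
    fourier_hypUKernel b' z' ha', fourierInv_hypUKernel b z ha] at hparseval
  let G (τ : ℝ) : ℂ := Complex.Gamma (a - Complex.I * τ) * hypU (a - Complex.I * τ) b z *
    (Complex.Gamma (a' + Complex.I * τ) * hypU (a' + Complex.I * τ) b' z')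
  calc ∫ τ, G τ = 2 * Real.pi * ∫ v, G (2 * Real.pi * v) := by
        rw [Measure.integral_comp_mul_left, abs_of_pos (by positivity), Complex.real_smul]
        push_cast
        field_simp
    _ = 2 * Real.pi * (Complex.Gamma (a + a') * hypU (a + a') (b + b') (z + z')) := by
        rw [← hparseval]
        congr! 3 with v
        simp only [G]
        push_cast
        ring_nf

theorem Gamma_mul_Gamma_mul_parD_mul_parD (a a' z w : ℂ) :
    Complex.Gamma a * Complex.Gamma a' * parD (1 - 2 * a) z * parD (1 - 2 * a') w =
      (2 : ℂ) ^ (-(a + a')) * z * w * Complex.exp (-(z ^ 2 + w ^ 2) / 4) *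
        (Complex.Gamma a * hypU a (3 / 2) (z ^ 2 / 2) *
          (Complex.Gamma a' * hypU a' (3 / 2) (w ^ 2 / 2))) := by
  have hpow (c : ℂ) : (1 - 2 * c - 1) / 2 = -c := by ring
  have hparam (c : ℂ) : (1 - (1 - 2 * c)) / 2 = c := by ring
  rw [parD, parD, hpow, hpow, hparam, hparam, neg_add, Complex.cpow_add _ _ two_ne_zero,
    neg_add, add_div, Complex.exp_add]
  ring

theorem integral_Gamma_mul_Gamma_mul_parD_mul_parD {a a' z w : ℂ} (ha : 0 < a.re)
    (ha' : 0 < a'.re) (hz : 0 < (z ^ 2).re) (hw : 0 < (w ^ 2).re) :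
    ∫ τ : ℝ, Complex.Gamma (a - Complex.I * τ) * Complex.Gamma (a' + Complex.I * τ) *
        parD (1 - 2 * (a - Complex.I * τ)) z * parD (1 - 2 * (a' + Complex.I * τ)) w =
      2 * Real.pi * (2 : ℂ) ^ (-(a + a')) * z * w * Complex.exp (-(z ^ 2 + w ^ 2) / 4) *
        (Complex.Gamma (a + a') * hypU (a + a') 3 ((z ^ 2 + w ^ 2) / 2)) := by
  simp only [Gamma_mul_Gamma_mul_parD_mul_parD, sub_add_add_cancel, integral_const_mul]
  rw [integral_Gamma_mul_hypU_mul_Gamma_mul_hypU _ _ ha ha' (by simpa) (by simpa),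
    ← add_div (z ^ 2), show (3 / 2 + 3 / 2 : ℂ) = 3 by norm_num]
  ring

theorem complex_Gamma_three_halves : Complex.Gamma (3 / 2) = (Real.sqrt Real.pi : ℂ) / 2 := by
  have h := Real.Gamma_add_one (s := 1 / 2) (by norm_num)
  rw [Real.Gamma_one_half_eq, show (1 / 2 + 1 : ℝ) = 3 / 2 by norm_num] at h
  rw [show (3 / 2 : ℂ) = ((3 / 2 : ℝ) : ℂ) by norm_num, Complex.Gamma_ofReal, h]
  push_cast
  ring

theorem hankelH11_I_mul_div_four (p : ℂ) :
    hankelH11 (Complex.I * p / 4) = -(2 * p / Real.pi) * Complex.exp (-p / 4) *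
      (Complex.Gamma (3 / 2) * hypU (3 / 2) 3 (p / 2)) := by
  have hexp : Complex.exp (Complex.I * (Complex.I * p / 4 - Real.pi)) = -Complex.exp (-p / 4) := by
    rw [show Complex.I * (Complex.I * p / 4 - Real.pi) = -p / 4 - Real.pi * Complex.I by
      linear_combination p / 4 * Complex.I_sq, Complex.exp_sub, Complex.exp_pi_mul_I, div_neg,
      div_one]
  have harg : -2 * Complex.I * (Complex.I * p / 4) = p / 2 := by
    linear_combination -p / 2 * Complex.I_sq
  have hsq : (Real.pi : ℂ) = (Real.sqrt Real.pi : ℂ) ^ 2 := by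
    exact_mod_cast (Real.sq_sqrt Real.pi_pos.le).symm
  have hne : (Real.sqrt Real.pi : ℂ) ≠ 0 := by simp [Real.pi_pos.le, Real.pi_ne_zero]
  rw [hankelH11, hexp, harg, complex_Gamma_three_halves, hsq]
  field_simp
  linear_combination 4 * p * hypU (3 / 2) 3 (p / 2) * Complex.I_sq

-- With `z = (1 - i) ξ` and `w = (1 - i) η` the argument of the Hankel function is `(ξ² + η²) / 2`.
theorem mul_hankelH11_eq_integral_parD {z w σ : ℂ} (hz : 0 < (z ^ 2).re) (hw : 0 < (w ^ 2).re)
    (hσ : |σ.re| < 3 / 4) :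
    z * w * hankelH11 (Complex.I * (z ^ 2 + w ^ 2) / 4) =
      -((2 : ℂ) ^ ((3 : ℂ) / 2) * (z ^ 2 + w ^ 2) / (Real.pi : ℂ) ^ 2) *
        ∫ τ : ℝ, Complex.Gamma (3 / 4 - (σ + Complex.I * τ)) *
          Complex.Gamma (3 / 4 + (σ + Complex.I * τ)) *
          parD (2 * (σ + Complex.I * τ) - 1 / 2) z * parD (-2 * (σ + Complex.I * τ) - 1 / 2) w := by
  obtain ⟨hσ_neg, hσ_pos⟩ := abs_lt.1 hσ
  have hint := integral_Gamma_mul_Gamma_mul_parD_mul_parD (a := 3 / 4 - σ) (a' := 3 / 4 + σ)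
    (by simpa using hσ_pos) (by simpa [neg_lt_iff_pos_add'] using hσ_neg) hz hw
  have hν (τ : ℝ) : 1 - 2 * (3 / 4 - (σ + Complex.I * τ)) = 2 * (σ + Complex.I * τ) - 1 / 2 := by
    ring
  have hν' (τ : ℝ) : 1 - 2 * (3 / 4 + (σ + Complex.I * τ)) = -2 * (σ + Complex.I * τ) - 1 / 2 := by
    ring
  simp only [sub_sub, add_assoc, hν, hν'] at hint
  rw [show 3 / 4 - σ + (3 / 4 + σ) = 3 / 2 by ring, Complex.cpow_neg] at hint
  have hpi : (Real.pi : ℂ) ≠ 0 := Complex.ofReal_ne_zero.2 Real.pi_ne_zero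
  have hpow : (2 : ℂ) ^ ((3 : ℂ) / 2) ≠ 0 := Complex.cpow_ne_zero_iff.2 (.inl two_ne_zero)
  rw [hankelH11_I_mul_div_four, hint]
  field_simp

theorem one_sub_I_mul_sq (w : ℂ) : ((1 - Complex.I) * w) ^ 2 = -2 * Complex.I * w ^ 2 := by
  linear_combination w ^ 2 * Complex.I_sq

/-- Addition theorem for the order-one Hankel function of the first kind. -/
theorem hankelH11_addition (ξ η σ : ℂ) (hξ : 0 < (ξ ^ 2).im) (hη : 0 < (η ^ 2).im)
    (hσ : |σ.re| < 3 / 4) :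
    ξ * η * hankelH11 ((ξ ^ 2 + η ^ 2) / 2) =
      -((2 : ℂ) ^ ((3 : ℂ) / 2) * (ξ ^ 2 + η ^ 2) / ((Real.pi : ℂ) ^ 2 * Complex.I)) *
        (Complex.I * ∫ τ : ℝ,
          Complex.Gamma (3 / 4 - (σ + Complex.I * τ)) *
          Complex.Gamma (3 / 4 + (σ + Complex.I * τ)) *
          parD (2 * (σ + Complex.I * τ) - 1 / 2) ((1 - Complex.I) * ξ) *
          parD (-2 * (σ + Complex.I * τ) - 1 / 2) ((1 - Complex.I) * η)) := by
  have hrot := mul_hankelH11_eq_integral_parD (z := (1 - Complex.I) * ξ) (w := (1 - Complex.I) * η)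
    (by simpa [one_sub_I_mul_sq] using hξ) (by simpa [one_sub_I_mul_sq] using hη) hσ
  have hprod : (1 - Complex.I) * ξ * ((1 - Complex.I) * η) = -2 * Complex.I * (ξ * η) := by
    linear_combination ξ * η * Complex.I_sq
  have harg : Complex.I * (-2 * Complex.I * (ξ ^ 2 + η ^ 2)) / 4 = (ξ ^ 2 + η ^ 2) / 2 := by
    linear_combination -(ξ ^ 2 + η ^ 2) / 2 * Complex.I_sq
  rw [one_sub_I_mul_sq, one_sub_I_mul_sq, ← mul_add, hprod, harg] at hrot
  have hI : (-2 * Complex.I : ℂ) ≠ 0 := by simp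
  refine mul_left_cancel₀ hI ?_
  rw [← mul_assoc, hrot]
  field_simp
end

section
/- Let ξ, η, σ ∈ ℂ with Im(ξ²) < 0, Im(η²) < 0, and |Re σ| < 3/4. Then ξη · H₁⁽²⁾((ξ² + η²)/2) = −(2^{3/2}(ξ² + η²)/(π² i)) ∫_{σ−i∞}^{σ+i∞} Γ(3/4 − s) Γ(3/4 + s) D_{2s−1/2}((1+i)ξ) D_{−2s−1/2}((1+i)η) ds. (Note that ((1+i)ξ)²/2 = iξ² has positive real part and Im((ξ²+η²)/2) < 0, so all functions appearing are in the domains of the stated representations.) -/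
/-- Order-one Hankel function of the second kind,
`H₁⁽²⁾(ζ) = (2i/√π) e^{-i(ζ-π)} (2ζ) U(3/2, 3, 2iζ)`, valid for `Im ζ < 0`. -/
noncomputable def hankelH12 (ζ : ℂ) : ℂ :=
  2 * Complex.I / (Real.sqrt Real.pi : ℂ) * Complex.exp (-Complex.I * (ζ - Real.pi)) *
    (2 * ζ) * hypU (3 / 2) 3 (2 * Complex.I * ζ)

/-!
The substitution `t = u / (1 - u)` turns the Laplace integral `Γ(a) U(a, b, z)` into the Mellin
transform in `a` of `k_{b,z}(u) = exp (-z u / (1 - u)) (1 - u) ^ (-b)` on `(0, 1)`. Since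
`k_{b,z} k_{c,w} = k_{b+c,z+w}`, the Parseval formula for Mellin transforms gives an addition
theorem for `U`. For `b = c = 3/2` the two factors are parabolic cylinder functions and the
right-hand side `U(3/2, 3, ·)` is a Hankel function.

Parseval requires integrability along vertical lines, which is not visible from the Laplace
integral. A contiguous relation, obtained by integrating a derivative over `(0, ∞)`, multiplies
`Γ(a) U(a, b, z)` by `a - b`; using it twice gives decay of order `|Im a| ^ (-2)`.
-/

open Complex MeasureTheory Set Filter Topology

section MellinParseval

variable {f g : ℝ → ℂ} {a d : ℂ}

lemma integral_cpow_mul_mellin {x : ℝ} (hx : 0 < x) (hg : MellinConvergent g d)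
    (hG : Integrable fun τ : ℝ ↦ mellin g (d + I * τ)) (hgx : ContinuousAt g x) :
    ∫ τ : ℝ, (x : ℂ) ^ (-(d + I * τ)) * mellin g (d + I * τ) = 2 * Real.pi * g x := by
  have hx' : (x : ℂ) ≠ 0 := ofReal_ne_zero.mpr hx.ne'
  have hre : (d.re : ℂ) + d.im * I = d := re_add_im d
  -- Twisting by `t ^ (i Im d)` replaces the base point `d` of the line by the real abscissa `Re d`.
  let h : ℝ → ℂ := fun t ↦ (t : ℂ) ^ (d.im * I) • g t
  have hmellin (τ : ℝ) : mellin h (d.re + τ * I) = mellin g (d + I * τ) := by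
    rw [mellin_cpow_smul]
    congr 1
    linear_combination hre
  have hconv : MellinConvergent h d.re := by
    rwa [MellinConvergent.cpow_smul, hre]
  have hcont : ContinuousAt h x :=
    (continuousAt_ofReal_cpow_const x _ (.inr hx.ne')).smul hgx
  have hvert : VerticalIntegrable (mellin h) d.re := by
    simpa only [VerticalIntegrable, hmellin] using hG
  have hinv := mellinInv_mellin_eq d.re h hx hconv hvert hcont
  simp only [mellinInv, hmellin, smul_eq_mul, real_smul] at hinv
  have hsplit (τ : ℝ) : (x : ℂ) ^ (-(d + I * τ)) =
      (x : ℂ) ^ (-(d.im * I)) * (x : ℂ) ^ (-(d.re + τ * I)) := by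
    rw [← cpow_add _ _ hx']
    congr 1
    linear_combination hre
  simp_rw [hsplit, mul_assoc, integral_const_mul]
  rw [cpow_neg, inv_mul_eq_iff_eq_mul₀ (by simp [hx'])]
  have hpi : (Real.pi : ℂ) ≠ 0 := ofReal_ne_zero.mpr Real.pi_ne_zero
  push_cast at hinv
  rw [one_div_mul_eq_div, div_eq_iff (by simp [hpi])] at hinv
  rw [hinv]
  simp only [h, smul_eq_mul]
  ring

lemma integrable_prod_cpow_mul_mellin (hf : MellinConvergent f a)
    (hG : Integrable fun τ : ℝ ↦ mellin g (d + I * τ)) :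
    Integrable (fun p : ℝ × ℝ ↦ (p.1 : ℂ) ^ (-(I * p.2)) *
      ((p.1 : ℂ) ^ (a - 1) * f p.1 * mellin g (d + I * p.2)))
      ((volume.restrict (Ioi 0)).prod volume) := by
  have hf' : Integrable (fun x : ℝ ↦ (x : ℂ) ^ (a - 1) * f x) (volume.restrict (Ioi 0)) := hf
  have hmeas : Measurable fun p : ℝ × ℝ ↦ (p.1 : ℂ) ^ (-(I * p.2)) := by fun_prop
  refine (hf'.mul_prod hG).bdd_mul (c := 1) hmeas.aestronglyMeasurable ?_
  filter_upwards [Measure.quasiMeasurePreserving_fst.ae (ae_restrict_mem measurableSet_Ioi)]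
    with p (hp : 0 < p.1)
  simp [norm_cpow_eq_rpow_re_of_pos hp]

theorem integral_mellin_mul_mellin (hf : MellinConvergent f a) (hg : MellinConvergent g d)
    (hG : Integrable fun τ : ℝ ↦ mellin g (d + I * τ))
    (hgc : ∀ᵐ x ∂volume.restrict (Ioi 0), ContinuousAt g x) :
    ∫ τ : ℝ, mellin f (a - I * τ) * mellin g (d + I * τ) =
      2 * Real.pi * mellin (fun x ↦ f x * g x) (a + d) := by
  have hcpow {x : ℝ} (hx : x ∈ Ioi 0) (s t : ℂ) : (x : ℂ) ^ (s + t) = x ^ s * x ^ t :=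
    cpow_add _ _ (ofReal_ne_zero.mpr (ne_of_gt hx))
  calc ∫ τ : ℝ, mellin f (a - I * τ) * mellin g (d + I * τ)
      = ∫ τ : ℝ, ∫ x in Ioi (0 : ℝ), (x : ℂ) ^ (-(I * τ)) *
          ((x : ℂ) ^ (a - 1) * f x * mellin g (d + I * τ)) := by
        simp_rw [mellin, ← integral_mul_const]
        congr! 2 with τ
        refine setIntegral_congr_fun measurableSet_Ioi fun x hx ↦ ?_
        simp only [smul_eq_mul, show a - I * τ - 1 = -(I * τ) + (a - 1) by ring, hcpow hx]
        ring
    _ = ∫ x in Ioi (0 : ℝ), ∫ τ : ℝ, (x : ℂ) ^ (-(I * τ)) *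
          ((x : ℂ) ^ (a - 1) * f x * mellin g (d + I * τ)) :=
        (integral_integral_swap (integrable_prod_cpow_mul_mellin hf hG)).symm
    _ = ∫ x in Ioi (0 : ℝ), (x : ℂ) ^ (a + d - 1) * f x *
          ∫ τ : ℝ, (x : ℂ) ^ (-(d + I * τ)) * mellin g (d + I * τ) := by
        refine setIntegral_congr_fun measurableSet_Ioi fun x hx ↦ ?_
        simp only [← integral_const_mul]
        congr! 1
        funext τ
        rw [show -(I * τ) = d + -(d + I * τ) by ring, show a + d - 1 = a - 1 + d by ring,
          hcpow hx, hcpow hx]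
        ring
    _ = ∫ x in Ioi (0 : ℝ), 2 * Real.pi * ((x : ℂ) ^ (a + d - 1) • (f x * g x)) := by
        refine integral_congr_ae ?_
        filter_upwards [hgc, ae_restrict_mem measurableSet_Ioi] with x hgx hx
        rw [integral_cpow_mul_mellin hx hg hG hgx, smul_eq_mul]
        ring
    _ = 2 * Real.pi * mellin (fun x ↦ f x * g x) (a + d) := by
        rw [integral_const_mul, mellin]

end MellinParseval

/-- The integrand `e^{-zt} t^{a-1} (1+t)^{b-a-1}` of the Laplace representation of `U`. -/
noncomputable def laplaceUIntegrand (a b z : ℂ) (t : ℝ) : ℂ :=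
  exp (-z * t) * (t : ℂ) ^ (a - 1) * ((1 : ℂ) + t) ^ (b - a - 1)

/-- The Laplace integral of `U` without the Gamma factor, i.e. `Γ(a) U(a,b,z)`. -/
noncomputable def laplaceU (a b z : ℂ) : ℂ :=
  ∫ t in Ioi (0 : ℝ), laplaceUIntegrand a b z t

section ContiguousRelation

variable {a b z : ℂ}

lemma norm_laplaceUIntegrand {t : ℝ} (ht : 0 < t) :
    ‖laplaceUIntegrand a b z t‖ =
      Real.exp (-z.re * t) * t ^ (a.re - 1) * (1 + t) ^ (b.re - a.re - 1) := by
  have h1t : (1 + t : ℂ) = ((1 + t : ℝ) : ℂ) := by push_cast; rfl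
  rw [laplaceUIntegrand, h1t, norm_mul, norm_mul, norm_exp, norm_cpow_eq_rpow_re_of_pos ht,
    norm_cpow_eq_rpow_re_of_pos (by positivity)]
  simp

lemma continuousOn_exp_mul_one_add_cpow (z c : ℂ) :
    ContinuousOn (fun t : ℝ ↦ exp (-z * t) * (1 + t : ℂ) ^ c) (Ici 0) := by
  refine ContinuousOn.mul (by fun_prop) (ContinuousOn.cpow_const (by fun_prop) fun t ht ↦ ?_)
  exact .inl (by simpa using (show 0 < 1 + t by linarith [mem_Ici.mp ht]))

lemma isBigO_exp_mul_one_add_cpow (c : ℂ) (hz : 0 < z.re) :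
    (fun t : ℝ ↦ exp (-z * t) * (1 + t : ℂ) ^ c) =O[atTop]
      fun t ↦ Real.exp (-(z.re / 2) * t) := by
  have hgrowth : (fun t : ℝ ↦ (1 + t : ℂ) ^ c) =O[atTop] fun t ↦ Real.exp (z.re / 2 * t) := by
    calc (fun t : ℝ ↦ (1 + t : ℂ) ^ c)
        =O[atTop] fun t : ℝ ↦ (1 + t) ^ c.re := by
          refine .of_norm_eventuallyLE ?_
          filter_upwards [eventually_gt_atTop 0] with t ht
          rw [← norm_cpow_eq_rpow_re_of_pos (by positivity)]
          push_cast
          rfl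
      _ =O[atTop] fun t : ℝ ↦ Real.exp (z.re / 2 * (1 + t)) :=
          ((isLittleO_rpow_exp_pos_mul_atTop c.re (half_pos hz)).comp_tendsto
            (tendsto_atTop_add_const_left atTop (1 : ℝ) tendsto_id)).isBigO
      _ =O[atTop] fun t ↦ Real.exp (z.re / 2 * t) := by
          simp only [mul_add, Real.exp_add]
          exact (Asymptotics.isBigO_refl _ _).const_mul_left _
  have hdecay : (fun t : ℝ ↦ exp (-z * t)) =O[atTop] fun t ↦ Real.exp (-z.re * t) :=
    .of_norm_le fun t ↦ by simp [norm_exp]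
  refine (hdecay.mul hgrowth).congr_right fun t ↦ ?_
  rw [← Real.exp_add]
  congr 1
  ring

lemma integrableOn_laplaceUIntegrand (ha : 0 < a.re) (hz : 0 < z.re) :
    IntegrableOn (laplaceUIntegrand a b z) (Ioi 0) := by
  have hcont := continuousOn_exp_mul_one_add_cpow z (b - a - 1)
  have hconv : MellinConvergent (fun t : ℝ ↦ exp (-z * t) * (1 + t : ℂ) ^ (b - a - 1)) a :=
    mellinConvergent_of_isBigO_rpow_exp (half_pos hz)
      ((hcont.mono Ioi_subset_Ici_self).locallyIntegrableOn measurableSet_Ioi)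
      (isBigO_exp_mul_one_add_cpow _ hz)
      (b := 0) (by
        simpa using ((hcont 0 self_mem_Ici).mono Ioi_subset_Ici_self).isBigO_one ℝ) ha
  refine hconv.congr_fun (fun t _ ↦ ?_) measurableSet_Ioi
  simp only [laplaceUIntegrand, smul_eq_mul]
  ring

lemma continuousOn_laplaceUIntegrand (ha : 1 < a.re) :
    ContinuousOn (laplaceUIntegrand a b z) (Ici 0) := by
  have hpow : Continuous fun t : ℝ ↦ (t : ℂ) ^ (a - 1) :=
    continuous_ofReal_cpow_const (by simpa using ha)
  refine (hpow.continuousOn.mul (continuousOn_exp_mul_one_add_cpow z (b - a - 1))).congr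
    fun t _ ↦ ?_
  simp only [laplaceUIntegrand, Pi.mul_apply]
  ring

lemma hasDerivAt_laplaceUIntegrand {t : ℝ} (ht : 0 < t) :
    HasDerivAt (laplaceUIntegrand (a + 1) (b + 2) z)
      ((a - b) * laplaceUIntegrand a b z t + b * laplaceUIntegrand a (b + 1) z t
        - z * laplaceUIntegrand (a + 1) (b + 2) z t) t := by
  have ht' : (t : ℂ) ≠ 0 := ofReal_ne_zero.mpr ht.ne'
  have h1t : 1 + (t : ℂ) ≠ 0 := by exact_mod_cast (by positivity : 1 + t ≠ 0)
  have hexp : HasDerivAt (fun w : ℂ ↦ exp (-z * w)) (exp (-z * t) * -z) t := by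
    simpa using ((hasDerivAt_id (t : ℂ)).const_mul (-z)).cexp
  have hpow (c : ℂ) : HasDerivAt (fun w : ℂ ↦ w ^ c) (c * (t : ℂ) ^ (c - 1)) t := by
    simpa using (hasDerivAt_id (t : ℂ)).cpow_const (c := c) (.inl (by simpa using ht))
  have hpow1 (c : ℂ) : HasDerivAt (fun w : ℂ ↦ (1 + w) ^ c) (c * (1 + t : ℂ) ^ (c - 1)) t := by
    simpa using ((hasDerivAt_id (t : ℂ)).const_add 1).cpow_const (c := c)
      (.inl (by simp only [id_eq, add_re, one_re, ofReal_re]; positivity))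
  have hprod := (hexp.mul (hpow (a + 1 - 1))).mul (hpow1 (b + 2 - (a + 1) - 1))
  refine hprod.comp_ofReal.congr_deriv ?_
  simp only [laplaceUIntegrand, Pi.mul_apply]
  rw [show b + 2 - (a + 1) - 1 = (b - a - 1) + 1 by ring,
    show b + 1 - a - 1 = (b - a - 1) + 1 by ring,
    show a + 1 - 1 = a - 1 + 1 by ring, add_sub_cancel_right, add_sub_cancel_right,
    cpow_add _ _ ht', cpow_add _ _ h1t, cpow_one, cpow_one]
  ring

theorem laplaceU_contiguous (ha : 0 < a.re) (hz : 0 < z.re) :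
    (a - b) * laplaceU a b z = z * laplaceU (a + 1) (b + 2) z - b * laplaceU a (b + 1) z := by
  have ha1 : 0 < (a + 1).re := by simp only [add_re, one_re]; positivity
  have hintegrable : IntegrableOn (laplaceUIntegrand a b z) (Ioi 0) :=
    integrableOn_laplaceUIntegrand ha hz
  have hintegrable1 : IntegrableOn (laplaceUIntegrand a (b + 1) z) (Ioi 0) :=
    integrableOn_laplaceUIntegrand ha hz
  have hintegrable2 : IntegrableOn (laplaceUIntegrand (a + 1) (b + 2) z) (Ioi 0) :=
    integrableOn_laplaceUIntegrand ha1 hz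
  have hA := hintegrable.const_mul (a - b)
  have hB := hintegrable1.const_mul b
  have hC := hintegrable2.const_mul z
  have hcont : ContinuousWithinAt (laplaceUIntegrand (a + 1) (b + 2) z) (Ici 0) 0 :=
    continuousOn_laplaceUIntegrand (by simpa using ha) 0 self_mem_Ici
  have hzero : laplaceUIntegrand (a + 1) (b + 2) z 0 = 0 := by
    have : a ≠ 0 := by rintro rfl; simp at ha
    simp [laplaceUIntegrand, this]
  have hlim := tendsto_zero_of_hasDerivAt_of_integrableOn_Ioi
    (fun t ht ↦ hasDerivAt_laplaceUIntegrand ht) ((hA.add hB).sub hC) hintegrable2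
  have hftc := integral_Ioi_of_hasDerivAt_of_tendsto hcont
    (fun t ht ↦ hasDerivAt_laplaceUIntegrand ht) ((hA.add hB).sub hC) hlim
  rw [hzero, integral_sub (hA.fun_add hB) hC, integral_add hA hB] at hftc
  simp only [integral_const_mul] at hftc
  simp only [laplaceU]
  linear_combination hftc

end ContiguousRelation

section VerticalDecay

variable {a b z : ℂ}

-- Both integrals on the right of `laplaceU_contiguous` have the same `a - b`, namely one less.
theorem laplaceU_contiguous_iterate (ha : 0 < a.re) (hz : 0 < z.re) :
    (a - b - 1) * (a - b) * laplaceU a b z =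
      z ^ 2 * laplaceU (a + 2) (b + 4) z - 2 * (b + 1) * z * laplaceU (a + 1) (b + 3) z
        + b * (b + 1) * laplaceU a (b + 2) z := by
  have ha1 : 0 < (a + 1).re := by simp only [add_re, one_re]; positivity
  have h := laplaceU_contiguous (b := b) ha hz
  have h1 := laplaceU_contiguous (b := b + 1) ha hz
  have h2 := laplaceU_contiguous (b := b + 2) ha1 hz
  ring_nf at h h1 h2 ⊢
  linear_combination (a - b - 1) * h + z * h2 - b * h1

lemma norm_laplaceU_le (a b z : ℂ) :
    ‖laplaceU a b z‖ ≤ ∫ t in Ioi (0 : ℝ), ‖laplaceUIntegrand a.re b z t‖ := by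
  refine (norm_integral_le_integral_norm _).trans_eq ?_
  refine setIntegral_congr_fun measurableSet_Ioi fun t (ht : 0 < t) ↦ ?_
  simp only [norm_laplaceUIntegrand ht, ofReal_re]

lemma exists_norm_laplaceU_le {σ : ℝ} (hσ : 0 < σ) (b : ℂ) (hz : 0 < z.re) :
    ∃ C : ℝ, ∀ a : ℂ, a.re = σ → ‖laplaceU a b z‖ ≤ C * (1 + (a.im - b.im) ^ 2)⁻¹ := by
  let B (σ' : ℝ) (b' : ℂ) : ℝ := ∫ t in Ioi (0 : ℝ), ‖laplaceUIntegrand σ' b' z t‖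
  refine ⟨B σ b + (‖z ^ 2‖ * B (σ + 2) (b + 4) + ‖2 * (b + 1) * z‖ * B (σ + 1) (b + 3)
    + ‖b * (b + 1)‖ * B σ (b + 2)), fun a ha ↦ ?_⟩
  have hbound (n : ℕ) (b' : ℂ) : ‖laplaceU (a + n) b' z‖ ≤ B (σ + n) b' := by
    simpa [B, ha] using norm_laplaceU_le (a + n) b' z
  have hbound0 : ∀ b', ‖laplaceU a b' z‖ ≤ B σ b' := by simpa using hbound 0
  have hbound1 : ∀ b', ‖laplaceU (a + 1) b' z‖ ≤ B (σ + 1) b' := by simpa using hbound 1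
  have hbound2 : ∀ b', ‖laplaceU (a + 2) b' z‖ ≤ B (σ + 2) b' := by simpa using hbound 2
  have hfactor : (a.im - b.im) ^ 2 ≤ ‖(a - b - 1) * (a - b)‖ := by
    rw [← sq_abs, sq, norm_mul]
    gcongr
    · simpa using abs_im_le_norm (a - b - 1)
    · simpa using abs_im_le_norm (a - b)
  rw [← div_eq_mul_inv, le_div_iff₀ (by positivity)]
  calc ‖laplaceU a b z‖ * (1 + (a.im - b.im) ^ 2)
      ≤ ‖laplaceU a b z‖ + ‖(a - b - 1) * (a - b) * laplaceU a b z‖ := by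
        rw [norm_mul]
        nlinarith [norm_nonneg (laplaceU a b z)]
    _ ≤ _ := by
        rw [laplaceU_contiguous_iterate (ha ▸ hσ) hz]
        refine add_le_add (hbound0 b) ((norm_add_le _ _).trans
          (add_le_add ((norm_sub_le _ _).trans (add_le_add ?_ ?_)) ?_)) <;>
        rw [norm_mul]
        · gcongr; exact hbound2 _
        · gcongr; exact hbound1 _
        · gcongr; exact hbound0 _

lemma integrable_laplaceU_vertical (ha : 0 < a.re) (b : ℂ) (hz : 0 < z.re) :
    Integrable fun τ : ℝ ↦ laplaceU (a + I * τ) b z := by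
  obtain ⟨C, hC⟩ := exists_norm_laplaceU_le ha b hz
  have hmeas : Measurable fun p : ℝ × ℝ ↦ laplaceUIntegrand (a + I * p.1) b z p.2 := by
    unfold laplaceUIntegrand
    fun_prop
  refine ((integrable_inv_one_add_sq.comp_add_right (a.im - b.im)).const_mul C).mono'
    hmeas.stronglyMeasurable.integral_prod_right.aestronglyMeasurable (.of_forall fun τ ↦ ?_)
  convert hC (a + I * τ) (by simp) using 4
  simp only [add_im, mul_im, I_re, I_im, ofReal_re, ofReal_im, zero_mul, one_mul, zero_add]
  ring

end VerticalDecay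

/-- The function whose Mellin transform in `a` is `Γ(a) U(a,b,z)`; it arises from the Laplace
integral by `t = u / (1 - u)`, and is extended by zero to `u ≥ 1`. -/
noncomputable def mellinKernelU (b z : ℂ) : ℝ → ℂ :=
  (Iio 1).indicator fun u ↦ exp (-z * (u / (1 - u))) * (1 - u : ℂ) ^ (-b)

section MellinKernel

variable {a b z : ℂ}

lemma hasDerivAt_div_one_sub {u : ℝ} (hu : u ≠ 1) :
    HasDerivAt (fun u : ℝ ↦ u / (1 - u)) ((1 - u) ^ 2)⁻¹ u := by
  have h1u : 1 - u ≠ 0 := sub_ne_zero.mpr hu.symm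
  refine ((hasDerivAt_id u).div ((hasDerivAt_id u).const_sub 1) h1u).congr_deriv ?_
  simp [field]

lemma bijOn_div_one_sub : BijOn (fun u : ℝ ↦ u / (1 - u)) (Ioo 0 1) (Ioi 0) := by
  refine ⟨fun u hu ↦ div_pos hu.1 (sub_pos.mpr hu.2), fun u hu v hv huv ↦ ?_, fun t ht ↦ ?_⟩
  · have hu' : 1 - u ≠ 0 := (sub_pos.mpr hu.2).ne'
    have hv' : 1 - v ≠ 0 := (sub_pos.mpr hv.2).ne'
    simp only [div_eq_div_iff hu' hv'] at huv
    linarith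
  · have ht0 : 0 < t := ht
    refine ⟨t / (1 + t), ⟨by positivity, by rw [div_lt_one] <;> linarith⟩, ?_⟩
    field_simp
    ring

lemma mellinKernelU_of_lt {u : ℝ} (hu : u < 1) :
    mellinKernelU b z u = exp (-z * (u / (1 - u))) * (1 - u : ℂ) ^ (-b) :=
  indicator_of_mem (mem_Iio.mpr hu) _

lemma abs_deriv_smul_laplaceUIntegrand {u : ℝ} (hu : u ∈ Ioo 0 1) :
    |((1 - u) ^ 2)⁻¹| • laplaceUIntegrand a b z (u / (1 - u)) =
      (u : ℂ) ^ (a - 1) • mellinKernelU b z u := by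
  have hv : 0 < 1 - u := sub_pos.mpr hu.2
  have hv' : (1 - u : ℂ) ≠ 0 := by exact_mod_cast hv.ne'
  have hinv_cpow (c : ℂ) : (((1 - u)⁻¹ : ℝ) : ℂ) ^ c = (1 - u : ℂ) ^ (-c) := by
    have harg : arg ((1 - u : ℝ) : ℂ) ≠ Real.pi := by
      rw [arg_ofReal_of_nonneg hv.le]
      exact Real.pi_ne_zero.symm
    rw [ofReal_inv, inv_cpow _ _ harg, ← cpow_neg, ofReal_sub, ofReal_one]
  have hone_add : (1 : ℂ) + (u / (1 - u) : ℝ) = ((1 - u)⁻¹ : ℝ) := by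
    push_cast
    field_simp
    ring
  have hdiv_cpow :
      ((u / (1 - u) : ℝ) : ℂ) ^ (a - 1) = u ^ (a - 1) * (1 - u : ℂ) ^ (-(a - 1)) := by
    rw [div_eq_mul_inv, ofReal_mul,
      mul_cpow_ofReal_nonneg hu.1.le (inv_nonneg.mpr hv.le), hinv_cpow]
  have hjac : ((|((1 - u) ^ 2)⁻¹| : ℝ) : ℂ) = (1 - u : ℂ) ^ (-2 : ℂ) := by
    rw [abs_of_pos (by positivity), cpow_neg]
    norm_cast
  rw [laplaceUIntegrand, mellinKernelU_of_lt hu.2, real_smul, hjac, hone_add, hdiv_cpow, hinv_cpow,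
    show -b = -2 + (-(a - 1) + -(b - a - 1)) by ring, cpow_add _ _ hv', cpow_add _ _ hv',
    smul_eq_mul]
  push_cast
  ring

lemma cpow_smul_mellinKernelU (s b z : ℂ) :
    (fun u : ℝ ↦ (u : ℂ) ^ s • mellinKernelU b z u) =
      (Iio 1).indicator fun u : ℝ ↦ (u : ℂ) ^ s • mellinKernelU b z u := by
  refine (indicator_eq_self.mpr fun u hu ↦ ?_).symm
  by_contra hu'
  exact hu (by simp [mellinKernelU, indicator_of_notMem hu'])

lemma mellinConvergent_mellinKernelU (ha : 0 < a.re) (b : ℂ) (hz : 0 < z.re) :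
    MellinConvergent (mellinKernelU b z) a := by
  have hintegrable := integrableOn_laplaceUIntegrand (b := b) ha hz
  rw [← bijOn_div_one_sub.image_eq, integrableOn_image_iff_integrableOn_abs_deriv_smul
    measurableSet_Ioo (fun u hu ↦ (hasDerivAt_div_one_sub hu.2.ne).hasDerivWithinAt)
    bijOn_div_one_sub.injOn] at hintegrable
  rw [MellinConvergent, cpow_smul_mellinKernelU, integrableOn_indicator_iff measurableSet_Iio,
    inter_comm, Ioi_inter_Iio]
  exact hintegrable.congr_fun (fun u hu ↦ abs_deriv_smul_laplaceUIntegrand hu) measurableSet_Ioo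

theorem mellin_mellinKernelU (a b z : ℂ) : mellin (mellinKernelU b z) a = laplaceU a b z := by
  rw [laplaceU, ← bijOn_div_one_sub.image_eq, integral_image_eq_integral_abs_deriv_smul
    measurableSet_Ioo (fun u hu ↦ (hasDerivAt_div_one_sub hu.2.ne).hasDerivWithinAt)
    bijOn_div_one_sub.injOn, mellin, cpow_smul_mellinKernelU,
    setIntegral_indicator measurableSet_Iio, Ioi_inter_Iio]
  exact setIntegral_congr_fun measurableSet_Ioo
    fun u hu ↦ (abs_deriv_smul_laplaceUIntegrand hu).symm

lemma mellinKernelU_mul_mellinKernelU (b c z w : ℂ) (u : ℝ) :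
    mellinKernelU b z u * mellinKernelU c w u = mellinKernelU (b + c) (z + w) u := by
  rcases lt_or_ge u 1 with hu | hu
  · have hv : (1 - u : ℂ) ≠ 0 := by exact_mod_cast (sub_pos.mpr hu).ne'
    rw [mellinKernelU_of_lt hu, mellinKernelU_of_lt hu, mellinKernelU_of_lt hu, neg_add b c,
      cpow_add _ _ hv, neg_add z w, add_mul, exp_add]
    ring
  · simp [mellinKernelU, hu.not_gt]

lemma continuousAt_mellinKernelU {u : ℝ} (hu : u ≠ 1) : ContinuousAt (mellinKernelU b z) u := by
  rcases hu.lt_or_gt with hu | hu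
  · have hv : (1 - u : ℂ) ∈ slitPlane := .inl (by simpa using hu)
    have hcont : ContinuousAt (fun u : ℝ ↦ exp (-z * (u / (1 - u))) * (1 - u : ℂ) ^ (-b)) u := by
      have := slitPlane_ne_zero hv
      have : ContinuousAt (fun u : ℝ ↦ (u : ℂ) / (1 - u)) u := by fun_prop (disch := assumption)
      exact (by fun_prop : ContinuousAt (fun u : ℝ ↦ exp (-z * (u / (1 - u)))) u).mul
        (ContinuousAt.cpow (by fun_prop) continuousAt_const hv)
    refine hcont.congr_of_eventuallyEq ?_
    filter_upwards [Iio_mem_nhds hu] with v hv using mellinKernelU_of_lt hv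
  · refine (continuousAt_const (y := (0 : ℂ))).congr_of_eventuallyEq ?_
    filter_upwards [Ioi_mem_nhds hu] with v hv
    exact indicator_of_notMem (notMem_Iio.mpr (mem_Ioi.mp hv).le) _

end MellinKernel

section Addition

variable {a d z w : ℂ}

lemma Gamma_mul_hypU (ha : 0 < a.re) (b z : ℂ) : Gamma a * hypU a b z = laplaceU a b z :=
  mul_inv_cancel_left₀ (Gamma_ne_zero_of_re_pos ha) _

theorem integral_laplaceU_mul_laplaceU (ha : 0 < a.re) (hd : 0 < d.re) (b c : ℂ)
    (hz : 0 < z.re) (hw : 0 < w.re) :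
    ∫ τ : ℝ, laplaceU (a - I * τ) b z * laplaceU (d + I * τ) c w =
      2 * Real.pi * laplaceU (a + d) (b + c) (z + w) := by
  have hvert : Integrable fun τ : ℝ ↦ mellin (mellinKernelU c w) (d + I * τ) := by
    simpa only [mellin_mellinKernelU] using integrable_laplaceU_vertical hd c hw
  have hcont : ∀ᵐ u ∂volume.restrict (Ioi 0), ContinuousAt (mellinKernelU c w) u := by
    filter_upwards [ae_restrict_of_ae (Measure.ae_ne volume 1)] with u hu
      using continuousAt_mellinKernelU hu
  have hparseval := integral_mellin_mul_mellin (mellinConvergent_mellinKernelU ha b hz)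
    (mellinConvergent_mellinKernelU hd c hw) hvert hcont
  simpa only [mellinKernelU_mul_mellinKernelU, mellin_mellinKernelU] using hparseval

theorem integral_Gamma_mul_hypU_mul_hypU (ha : 0 < a.re) (hd : 0 < d.re) (b c : ℂ)
    (hz : 0 < z.re) (hw : 0 < w.re) :
    ∫ τ : ℝ, Gamma (a - I * τ) * Gamma (d + I * τ) *
        (hypU (a - I * τ) b z * hypU (d + I * τ) c w) =
      2 * Real.pi * (Gamma (a + d) * hypU (a + d) (b + c) (z + w)) := by
  have had : 0 < (a + d).re := by simpa using add_pos ha hd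
  rw [Gamma_mul_hypU had, ← integral_laplaceU_mul_laplaceU ha hd b c hz hw]
  congr! 2 with τ
  rw [mul_mul_mul_comm, Gamma_mul_hypU (by simpa using ha), Gamma_mul_hypU (by simpa using hd)]

end Addition

lemma parD_one_add_I_mul (s ξ : ℂ) :
    parD (2 * s - 1 / 2) ((1 + I) * ξ) =
      2 ^ (s - 3 / 4) * exp (-(I * ξ ^ 2) / 2) * ((1 + I) * ξ) *
        hypU (3 / 4 - s) (3 / 2) (I * ξ ^ 2) := by
  have hsq : ((1 + I) * ξ) ^ 2 = 2 * (I * ξ ^ 2) := by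
    linear_combination ξ ^ 2 * I_sq
  rw [parD, hsq, show (2 * s - 1 / 2 - 1) / 2 = s - 3 / 4 by ring,
    show (1 - (2 * s - 1 / 2)) / 2 = 3 / 4 - s by ring,
    show -(2 * (I * ξ ^ 2)) / 4 = -(I * ξ ^ 2) / 2 by ring,
    show 2 * (I * ξ ^ 2) / 2 = I * ξ ^ 2 by ring]

lemma parD_mul_parD_neg (s ξ η : ℂ) :
    parD (2 * s - 1 / 2) ((1 + I) * ξ) * parD (-2 * s - 1 / 2) ((1 + I) * η) =
      2 ^ (-(3 / 2) : ℂ) * exp (-(I * ((ξ ^ 2 + η ^ 2) / 2))) * (2 * I * ξ * η) *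
        (hypU (3 / 4 - s) (3 / 2) (I * ξ ^ 2) * hypU (3 / 4 + s) (3 / 2) (I * η ^ 2)) := by
  have hpow : (2 : ℂ) ^ (-(3 / 2) : ℂ) = 2 ^ (s - 3 / 4) * 2 ^ (-s - 3 / 4) := by
    rw [← cpow_add _ _ two_ne_zero]
    ring_nf
  have hexp : exp (-(I * ((ξ ^ 2 + η ^ 2) / 2))) =
      exp (-(I * ξ ^ 2) / 2) * exp (-(I * η ^ 2) / 2) := by
    rw [← exp_add]
    ring_nf
  have hI : 2 * I * ξ * η = ((1 + I) * ξ) * ((1 + I) * η) := by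
    linear_combination (-ξ * η) * I_sq
  rw [show -2 * s = 2 * -s by ring, parD_one_add_I_mul, parD_one_add_I_mul, hpow, hexp, hI,
    sub_neg_eq_add]
  ring

theorem integral_Gamma_mul_parD_mul_parD {ξ η σ : ℂ} (hξ : (ξ ^ 2).im < 0)
    (hη : (η ^ 2).im < 0) (hσ : |σ.re| < 3 / 4) :
    ∫ τ : ℝ, Gamma (3 / 4 - (σ + I * τ)) * Gamma (3 / 4 + (σ + I * τ)) *
        parD (2 * (σ + I * τ) - 1 / 2) ((1 + I) * ξ) *
        parD (-2 * (σ + I * τ) - 1 / 2) ((1 + I) * η) =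
      2 ^ (-(3 / 2) : ℂ) * exp (-(I * ((ξ ^ 2 + η ^ 2) / 2))) * (2 * I * ξ * η) *
        (2 * Real.pi * (Gamma (3 / 2) * hypU (3 / 2) 3 (I * (ξ ^ 2 + η ^ 2)))) := by
  obtain ⟨hσ_lower, hσ_upper⟩ := abs_lt.mp hσ
  have hre : ((3 : ℂ) / 4).re = 3 / 4 := by norm_num
  have ha : 0 < (3 / 4 - σ).re := by rw [sub_re, hre]; linarith
  have hd : 0 < (3 / 4 + σ).re := by rw [add_re, hre]; linarith
  have hU := integral_Gamma_mul_hypU_mul_hypU ha hd (3 / 2) (3 / 2)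
    (z := I * ξ ^ 2) (w := I * η ^ 2) (by simpa using hξ) (by simpa using hη)
  rw [show 3 / 4 - σ + (3 / 4 + σ) = 3 / 2 by ring, show (3 / 2 + 3 / 2 : ℂ) = 3 by norm_num,
    ← mul_add] at hU
  rw [← hU, ← integral_const_mul]
  congr! 2
  rw [mul_assoc, parD_mul_parD_neg, sub_sub, add_assoc]
  ring

lemma hankelH12_eq_Gamma_mul_hypU (ζ : ℂ) :
    hankelH12 ζ =
      -(8 * I * ζ / Real.pi) * exp (-(I * ζ)) * (Gamma (3 / 2) * hypU (3 / 2) 3 (2 * I * ζ)) := by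
  have hGamma : Gamma (3 / 2) = (√Real.pi : ℂ) / 2 := by
    rw [show (3 / 2 : ℂ) = 1 / 2 + 1 by norm_num, Gamma_add_one _ (by norm_num),
      Gamma_one_half_eq, Real.sqrt_eq_rpow, ofReal_cpow Real.pi_pos.le]
    push_cast
    ring
  have hsqrt : (√Real.pi : ℂ) ≠ 0 := by simp [Real.sqrt_ne_zero', Real.pi_pos]
  have hpi : (Real.pi : ℂ) = (√Real.pi : ℂ) ^ 2 := by
    rw [← ofReal_pow, Real.sq_sqrt Real.pi_pos.le]
  have hexp : exp (-I * (ζ - Real.pi)) = -exp (-(I * ζ)) := by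
    rw [show -I * (ζ - Real.pi) = -(I * ζ) + Real.pi * I by ring, exp_add, exp_pi_mul_I]
    ring
  rw [hankelH12, hexp, hGamma, hpi]
  field_simp
  ring

/-- Addition theorem for the order-one Hankel function of the second kind. -/
theorem hankelH12_addition (ξ η σ : ℂ) (hξ : (ξ ^ 2).im < 0) (hη : (η ^ 2).im < 0)
    (hσ : |σ.re| < 3 / 4) :
    ξ * η * hankelH12 ((ξ ^ 2 + η ^ 2) / 2) =
      -((2 : ℂ) ^ ((3 : ℂ) / 2) * (ξ ^ 2 + η ^ 2) / ((Real.pi : ℂ) ^ 2 * Complex.I)) *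
        (Complex.I * ∫ τ : ℝ,
          Complex.Gamma (3 / 4 - (σ + Complex.I * τ)) *
          Complex.Gamma (3 / 4 + (σ + Complex.I * τ)) *
          parD (2 * (σ + Complex.I * τ) - 1 / 2) ((1 + Complex.I) * ξ) *
          parD (-2 * (σ + Complex.I * τ) - 1 / 2) ((1 + Complex.I) * η)) := by
  have hpow : (2 : ℂ) ^ ((3 : ℂ) / 2) * 2 ^ (-(3 / 2) : ℂ) = 1 := by
    rw [← cpow_add _ _ two_ne_zero]
    norm_num
  have hpi : (Real.pi : ℂ) ≠ 0 := ofReal_ne_zero.mpr Real.pi_ne_zero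
  rw [integral_Gamma_mul_parD_mul_parD hξ hη hσ, hankelH12_eq_Gamma_mul_hypU,
    show 2 * I * ((ξ ^ 2 + η ^ 2) / 2) = I * (ξ ^ 2 + η ^ 2) by ring]
  generalize exp (-(I * ((ξ ^ 2 + η ^ 2) / 2))) = E
  generalize Gamma (3 / 2) * hypU (3 / 2) 3 (I * (ξ ^ 2 + η ^ 2)) = J
  field_simp
  linear_combination (8 * ξ * η * (ξ ^ 2 + η ^ 2) * E * J) * hpow
end
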